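/- Let n > t ≥ 0 be integers with β = t/n < 1/2, ξ = (1-2β)/(1-β), p ∈ (0,1), q = 1 - (1-p)^{n-t}, and assume q ≤ ξ/6. Let N > 0 be a real number and let x, y, z be real numbers satisfying: (1-ξ/6)qN < x < (1+ξ/6)qN; y > (1-ξ/6)·(n-t)p(1-p)^{n-t-1}·N; and z < p·t·N + (ξ/6)qN. Then: (i) y > (1-ξ/3)qN; (ii) z < (1-2ξ/3)qN; (iii) z < (1-ξ/2)x; and (iv) z < y. -/

import Mathlib

/-!
Put `m = n - t`, so that `q` is the probability of at least one success among `m` independent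
trials. The union bound gives `q ≤ m p`, and exactly one success has probability
`m p (1 - p) ^ (m - 1) ≤ q`. Since `(1 - p) ^ (m - 1) ≥ 1 - q ≥ 1 - ξ / 6`, the three quantities
`m p`, `q` and `m p (1 - p) ^ (m - 1)` agree up to factors `1 - ξ / 6`. The definition of `ξ`
amounts to `t = (1 - ξ) m`, so `E[Z] = (1 - ξ) m p N` is at most `(1 - 5 ξ / 6) E[X]`, and this gap
absorbs the deviations of relative size `ξ / 6`.
-/

section Probabilities

variable {R : Type*} [CommRing R]

/-- The probability of at least one success in `m` independent trials of success probability `p`,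
written `q` in the theorem for `m = n - t`. -/
def successProb (p : R) (m : ℕ) : R := 1 - (1 - p) ^ m

/-- The probability of exactly one success in `m` independent trials of success probability `p`;
the truncated `m - 1` at `m = 0` is harmless because of the factor `m`. -/
def singleSuccessProb (p : R) (m : ℕ) : R := m * p * (1 - p) ^ (m - 1)

variable [LinearOrder R] [IsStrictOrderedRing R] {p ε : R} {m : ℕ}

theorem successProb_nonneg (hp₀ : 0 ≤ p) (hp₁ : p ≤ 1) : 0 ≤ successProb p m :=
  sub_nonneg.2 (pow_le_one₀ (sub_nonneg.2 hp₁) (sub_le_self 1 hp₀))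

theorem successProb_le_mul (hp : p ≤ 2) : successProb p m ≤ m * p := by
  have bernoulli : 1 + m * ((1 - p) - 1) ≤ (1 - p) ^ m := one_add_mul_sub_le_pow (by linarith) m
  rw [successProb]
  linarith

theorem singleSuccessProb_le_successProb (hp : p ≤ 1) :
    singleSuccessProb p m ≤ successProb p m := by
  have binomial : (1 - p) ^ m + m * (1 - p) ^ (m - 1) * p ≤ (1 - p + p) ^ m :=
    pow_add_mul_le_add_pow (sub_nonneg.2 hp) (by linarith) m
  rw [sub_add_cancel, one_pow] at binomial
  rw [singleSuccessProb, successProb]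
  linarith

theorem one_sub_le_pow_pred_of_successProb_le (hp₀ : 0 ≤ p) (hp₁ : p ≤ 1)
    (hε : successProb p m ≤ ε) : 1 - ε ≤ (1 - p) ^ (m - 1) :=
  (sub_le_comm.1 hε).trans <|
    pow_le_pow_of_le_one (sub_nonneg.2 hp₁) (sub_le_self 1 hp₀) (Nat.sub_le m 1)

theorem one_sub_mul_mul_le_singleSuccessProb (hp₀ : 0 ≤ p) (hp₁ : p ≤ 1)
    (hε : successProb p m ≤ ε) : (1 - ε) * (m * p) ≤ singleSuccessProb p m := by
  rw [singleSuccessProb, mul_comm]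
  gcongr
  exact one_sub_le_pow_pred_of_successProb_le hp₀ hp₁ hε

theorem one_sub_two_mul_mul_successProb_le (hp₀ : 0 ≤ p) (hp₁ : p ≤ 1)
    (hε : successProb p m ≤ ε) (hε₁ : ε ≤ 1) :
    (1 - 2 * ε) * successProb p m ≤ (1 - ε) * singleSuccessProb p m := by
  have hq₀ : 0 ≤ successProb p m := successProb_nonneg hp₀ hp₁
  calc (1 - 2 * ε) * successProb p m
      ≤ (1 - ε) * (1 - ε) * successProb p m := by
        gcongr
        linarith [sq_nonneg ε]
    _ = (1 - ε) * ((1 - ε) * successProb p m) := mul_assoc _ _ _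
    _ ≤ (1 - ε) * ((1 - ε) * (m * p)) := by
        gcongr
        exact successProb_le_mul (hp₁.trans one_le_two)
    _ ≤ (1 - ε) * singleSuccessProb p m := by
        gcongr
        exact one_sub_mul_mul_le_singleSuccessProb hp₀ hp₁ hε

theorem one_sub_sub_mul_mul_le_one_sub_mul_successProb {δ : R} (hp₀ : 0 ≤ p) (hp₁ : p ≤ 1)
    (hε : successProb p m ≤ ε) (hδ₀ : 0 ≤ δ) (hδ₁ : δ ≤ 1) :
    (1 - δ - ε) * (m * p) ≤ (1 - δ) * successProb p m := by
  have hε₀ : 0 ≤ ε := (successProb_nonneg hp₀ hp₁).trans hε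
  calc (1 - δ - ε) * (m * p)
      ≤ (1 - δ) * (1 - ε) * (m * p) := by
        gcongr
        linarith [mul_nonneg hδ₀ hε₀]
    _ = (1 - δ) * ((1 - ε) * (m * p)) := mul_assoc _ _ _
    _ ≤ (1 - δ) * successProb p m := by
        gcongr
        exact (one_sub_mul_mul_le_singleSuccessProb hp₀ hp₁ hε).trans
          (singleSuccessProb_le_successProb hp₁)

end Probabilities

section Field

variable {K : Type*} [Field K]

theorem one_sub_two_mul_div_div_one_sub_div {n t : K} (hn : n ≠ 0) (hnt : n - t ≠ 0) :
    (1 - 2 * (t / n)) / (1 - t / n) = 1 - t / (n - t) := by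
  rw [one_sub_div hn]
  field_simp
  ring

variable [LinearOrder K] [IsStrictOrderedRing K]

theorem one_sub_two_mul_div_one_sub_mem_Icc {β : K} (hβ₀ : 0 ≤ β) (hβ : β ≤ 1 / 2) :
    (1 - 2 * β) / (1 - β) ∈ Set.Icc 0 1 :=
  ⟨div_nonneg (by linarith) (by linarith), div_le_one_of_le₀ (by linarith) (by linarith)⟩

theorem stmt_8_general {m : ℕ} {t ξ p N x y z : K} (hξ₀ : 0 ≤ ξ) (hξ₁ : ξ ≤ 1)
    (ht : t ≤ (1 - ξ) * m) (hp₀ : 0 ≤ p) (hp₁ : p ≤ 1) (hq : successProb p m ≤ ξ / 6)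
    (hN : 0 ≤ N) (hx : (1 - ξ / 6) * successProb p m * N < x)
    (hy : (1 - ξ / 6) * singleSuccessProb p m * N < y)
    (hz : z < p * t * N + ξ / 6 * successProb p m * N) :
    (1 - ξ / 3) * successProb p m * N < y ∧
    z < (1 - 2 * ξ / 3) * successProb p m * N ∧
    z < (1 - ξ / 2) * x ∧
    z < y := by
  set q := successProb p m
  have hqN : 0 ≤ q * N := mul_nonneg (successProb_nonneg hp₀ hp₁) hN
  have single_ge : (1 - 2 * (ξ / 6)) * q ≤ (1 - ξ / 6) * singleSuccessProb p m :=
    one_sub_two_mul_mul_successProb_le hp₀ hp₁ hq (by linarith)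
  have mul_t_le : p * t ≤ (1 - 5 * ξ / 6) * q :=
    calc p * t ≤ p * ((1 - ξ) * m) := by gcongr
      _ = (1 - 5 * ξ / 6 - ξ / 6) * (m * p) := by ring
      _ ≤ (1 - 5 * ξ / 6) * q :=
        one_sub_sub_mul_mul_le_one_sub_mul_successProb hp₀ hp₁ hq (by linarith) (by linarith)
  have y_gt : (1 - ξ / 3) * q * N < y := by
    linarith [mul_le_mul_of_nonneg_right single_ge hN]
  have z_lt : z < (1 - 2 * ξ / 3) * q * N := by
    linarith [mul_le_mul_of_nonneg_right mul_t_le hN]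
  have z_lt_x : z < (1 - ξ / 2) * x :=
    calc z < (1 - 2 * ξ / 3) * q * N := z_lt
      _ ≤ (1 - ξ / 2) * ((1 - ξ / 6) * q * N) := by linarith [mul_nonneg (sq_nonneg ξ) hqN]
      _ ≤ (1 - ξ / 2) * x := mul_le_mul_of_nonneg_left hx.le (by linarith)
  have z_lt_y : z < y := by linarith [mul_nonneg hξ₀ hqN]
  exact ⟨y_gt, z_lt, z_lt_x, z_lt_y⟩

end Field

/-- deterministic content of the Typical Properties Lemma:
Let `n > t ≥ 0` with `β = t/n < 1/2`, `ξ = (1-2β)/(1-β)`, `p ∈ (0,1)`,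
`q = 1-(1-p)^(n-t)`, `q ≤ ξ/6`.  Let `N > 0` and reals `x, y, z` satisfying
`(1-ξ/6)qN < x < (1+ξ/6)qN`, `y > (1-ξ/6)(n-t)p(1-p)^(n-t-1)N`, and
`z < p·t·N + (ξ/6)qN`.  Then (i) `y > (1-ξ/3)qN`; (ii) `z < (1-2ξ/3)qN`;
(iii) `z < (1-ξ/2)x`; (iv) `z < y`. -/
theorem stmt_8 (n t : ℕ) (hnt : t < n)
    (β : ℝ) (hβ : β = (t : ℝ) / n) (hβhalf : β < 1 / 2)
    (ξ : ℝ) (hξ : ξ = (1 - 2 * β) / (1 - β))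
    (p : ℝ) (hp0 : 0 < p) (hp1 : p < 1)
    (q : ℝ) (hq : q = 1 - (1 - p) ^ (n - t)) (hq6 : q ≤ ξ / 6)
    (N : ℝ) (hN : 0 < N) (x y z : ℝ)
    (hx1 : (1 - ξ / 6) * q * N < x) (hx2 : x < (1 + ξ / 6) * q * N)
    (hy : y > (1 - ξ / 6) * (((n : ℝ) - t) * p * (1 - p) ^ (n - t - 1)) * N)
    (hz : z < p * t * N + (ξ / 6) * q * N) :
    y > (1 - ξ / 3) * q * N ∧
    z < (1 - 2 * ξ / 3) * q * N ∧
    z < (1 - ξ / 2) * x ∧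
    z < y := by
  subst hβ hξ hq
  have hn : (n : ℝ) ≠ 0 := Nat.cast_ne_zero.2 (Nat.ne_zero_of_lt hnt)
  have hm : (n : ℝ) - t ≠ 0 := sub_ne_zero.2 (Nat.cast_injective.ne hnt.ne')
  have hξ := one_sub_two_mul_div_one_sub_mem_Icc (by positivity) hβhalf.le
  have ht : (t : ℝ) = (1 - (1 - 2 * (t / n : ℝ)) / (1 - t / n)) * (n - t) := by
    rw [one_sub_two_mul_div_div_one_sub_div hn hm, sub_sub_cancel, div_mul_cancel₀ _ hm]
  rw [← Nat.cast_sub hnt.le] at ht hy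
  exact stmt_8_general hξ.1 hξ.2 ht.le hp0.le hp1.le hq6 hN.le hx1 hy hz
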